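/- arXiv:gr-qc/0601124 — 3 statements merged into one kernel-verified Lean document; each statement's English description precedes it below -/
import Mathlib

section
/- Let X be a reflexive real Banach space, let L : X → X* be a bounded linear operator which is coercive (there exists δ > 0 with (L u)(u) ≥ δ‖u‖² for all u ∈ X), let K : X → X* be a compact linear operator, and set M = L + K. Define Mᵗ : X → X* by (Mᵗ u)(v) = (M v)(u) for all u, v ∈ X. Then the range of M equals the annihilator of ker Mᵗ, i.e. Ran M = {ω ∈ X* : ω(u) = 0 for all u ∈ ker Mᵗ}. -/
/-!
Coercivity makes `L` bounded below. Hence a bounded sequence whose image under `L + K` converges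
has a convergent subsequence: compactness of `K` makes a subsequence of the images under `K`, and
then of the images under `L`, converge. Passing to the quotient by the kernel, an operator with this
property is bounded below, so its range is closed. By Hahn–Banach a closed range in `X*` is cut out
by the elements of `X**` vanishing on it, and by reflexivity these are evaluations at points of `X`,
namely at the points of `ker Mᵗ`.
-/

open Bornology Filter Topology

section ClosedRange

theorem exists_mem_shell_norm_map_lt {𝕜 E F : Type*} [NontriviallyNormedField 𝕜]
    [SeminormedAddCommGroup E] [NormedSpace 𝕜 E] [SeminormedAddCommGroup F] [NormedSpace 𝕜 F]
    {T : E →L[𝕜] F} (hT : ∀ k, ¬AntilipschitzWith k T) {c : 𝕜} (hc : 1 < ‖c‖) {ε : ℝ}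
    (hε : 0 < ε) :
    ∃ x, ‖x‖ < 1 ∧ 1 / ‖c‖ ≤ ‖x‖ ∧ ‖T x‖ < ε := by
  have hsmall : ∃ x, ‖T x‖ < ε * ‖x‖ := by
    by_contra! hbelow
    obtain ⟨k, hk⟩ := (antilipschitzWith_iff_exists_mul_le_norm (f := T)).2 ⟨ε, hε, hbelow⟩
    exact hT k hk
  obtain ⟨x, hx⟩ := hsmall
  have hx0 : ‖x‖ ≠ 0 := by
    intro h
    rw [h, mul_zero] at hx
    exact hx.not_ge (norm_nonneg _)
  obtain ⟨d, hd, hdx1, hdxc, -⟩ := rescale_to_shell_semi_normed hc one_pos hx0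
  refine ⟨d • x, hdx1, hdxc, ?_⟩
  calc ‖T (d • x)‖ = ‖d‖ * ‖T x‖ := by rw [map_smul, norm_smul]
    _ < ‖d‖ * (ε * ‖x‖) := mul_lt_mul_of_pos_left hx (norm_pos_iff.2 hd)
    _ = ε * ‖d • x‖ := by rw [norm_smul]; ring
    _ ≤ ε := mul_le_of_le_one_right hε.le hdx1.le

variable {𝕜 E F : Type*} [NontriviallyNormedField 𝕜] [NormedAddCommGroup E] [NormedSpace 𝕜 E]
  [NormedAddCommGroup F] [NormedSpace 𝕜 F]

theorem exists_tendsto_subseq_of_tendsto_add_of_isCompactOperator [CompleteSpace E]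
    {L K : E →L[𝕜] F} {k : NNReal} (hL : AntilipschitzWith k L) (hK : IsCompactOperator K)
    {x : ℕ → E} (hx : IsBounded (Set.range x)) {y : F}
    (hy : Tendsto (fun n ↦ (L + K) (x n)) atTop (𝓝 y)) :
    ∃ u, ∃ φ : ℕ → ℕ, StrictMono φ ∧ Tendsto (x ∘ φ) atTop (𝓝 u) := by
  obtain ⟨C, hC, hKC⟩ :=
    IsCompactOperator.image_subset_compact_of_bounded (f := K.toLinearMap) hK hx
  obtain ⟨z, -, φ, hφ, hKz⟩ := hC.tendsto_subseq (x := fun n ↦ K (x n))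
    fun n ↦ hKC ⟨x n, ⟨n, rfl⟩, rfl⟩
  have hLφ : Tendsto (L ∘ x ∘ φ) atTop (𝓝 (y - z)) :=
    ((hy.comp hφ.tendsto_atTop).sub hKz).congr fun n ↦ by simp
  have hLemb : IsClosedEmbedding L := hL.isClosedEmbedding L.uniformContinuous
  obtain ⟨u, hu⟩ : y - z ∈ Set.range L :=
    hLemb.isClosed_range.mem_of_tendsto hLφ (.of_forall fun n ↦ ⟨_, rfl⟩)
  exact ⟨u, φ, hφ, hLemb.tendsto_nhds_iff.2 (hu ▸ hLφ)⟩

theorem exists_antilipschitzWith_liftQL_ker {T : E →L[𝕜] F}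
    (hT : ∀ x : ℕ → E, IsBounded (Set.range x) → Tendsto (T ∘ x) atTop (𝓝 0) →
      ∃ u, ∃ φ : ℕ → ℕ, StrictMono φ ∧ Tendsto (x ∘ φ) atTop (𝓝 u)) :
    ∃ k, AntilipschitzWith k (T.ker.liftQL T le_rfl : E ⧸ T.ker →L[𝕜] F) := by
  obtain ⟨c, hc⟩ := NormedField.exists_one_lt_norm 𝕜
  by_contra! hnot
  have hsmall (n : ℕ) : ∃ x : E, ‖x‖ ≤ 2 ∧ 1 / ‖c‖ ≤ ‖T.ker.mkQL x‖ ∧ ‖T x‖ ≤ 1 / (n + 1 : ℝ) := by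
    obtain ⟨q, hq1, hqc, hTq⟩ := exists_mem_shell_norm_map_lt hnot hc
      (Nat.one_div_pos_of_nat (α := ℝ) (n := n))
    obtain ⟨x, rfl, hx⟩ := Submodule.Quotient.norm_mk_lt q one_pos
    exact ⟨x, by linarith, hqc, hTq.le⟩
  choose x hx2 hxc hTx using hsmall
  have hTx0 : Tendsto (T ∘ x) atTop (𝓝 0) :=
    squeeze_zero_norm hTx tendsto_one_div_add_atTop_nhds_zero_nat
  have hxb : IsBounded (Set.range x) :=
    isBounded_iff_forall_norm_le.2 ⟨2, Set.forall_mem_range.2 hx2⟩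
  obtain ⟨u, φ, hφ, hu⟩ := hT x hxb hTx0
  have hTu : T u = 0 :=
    tendsto_nhds_unique ((T.continuous.tendsto u).comp hu) (hTx0.comp hφ.tendsto_atTop)
  have hmk : Tendsto (fun n ↦ ‖T.ker.mkQL (x (φ n))‖) atTop (𝓝 ‖T.ker.mkQL u‖) :=
    ((T.ker.mkQL.continuous.tendsto u).comp hu).norm
  have hmku : T.ker.mkQL u = 0 := (Submodule.Quotient.mk_eq_zero _).2 hTu
  have hle : 1 / ‖c‖ ≤ 0 := by
    simpa only [hmku, norm_zero] using ge_of_tendsto' hmk fun n ↦ hxc (φ n)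
  exact hle.not_gt (by positivity)

theorem isClosed_range_of_exists_tendsto_subseq [CompleteSpace E] {T : E →L[𝕜] F}
    (hT : ∀ x : ℕ → E, IsBounded (Set.range x) → Tendsto (T ∘ x) atTop (𝓝 0) →
      ∃ u, ∃ φ : ℕ → ℕ, StrictMono φ ∧ Tendsto (x ∘ φ) atTop (𝓝 u)) :
    IsClosed (T.range : Set F) := by
  obtain ⟨k, hk⟩ := exists_antilipschitzWith_liftQL_ker hT
  have hrange : (T.ker.liftQL T le_rfl).range = T.range := Submodule.range_liftQ _ _ _
  rw [← hrange]
  exact hk.isClosed_range (T.ker.liftQL T le_rfl).uniformContinuous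

theorem isClosed_range_add_of_isCompactOperator [CompleteSpace E] {L K : E →L[𝕜] F} {k : NNReal}
    (hL : AntilipschitzWith k L) (hK : IsCompactOperator K) : IsClosed ((L + K).range : Set F) :=
  isClosed_range_of_exists_tendsto_subseq fun _ hx hy ↦
    exists_tendsto_subseq_of_tendsto_add_of_isCompactOperator hL hK hx hy

end ClosedRange

section Annihilator

variable {𝕜 E F : Type*} [RCLike 𝕜] [NormedAddCommGroup E] [NormedSpace 𝕜 E]
  [NormedAddCommGroup F] [NormedSpace 𝕜 F]

theorem mem_of_isClosed_of_forall_dual_eq_zero {p : Submodule 𝕜 E} (hp : IsClosed (p : Set E))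
    {x : E} (hx : ∀ f : StrongDual 𝕜 E, (∀ y ∈ p, f y = 0) → f x = 0) : x ∈ p := by
  refine (Submodule.Quotient.mk_eq_zero p).1 <|
    SeparatingDual.eq_zero_of_forall_dual_eq_zero (R := 𝕜) fun g ↦ ?_
  exact hx (g ∘L p.mkQL) fun y hy ↦ by simp [(Submodule.Quotient.mk_eq_zero p).2 hy]

theorem range_eq_annihilator_ker_flip
    (hrefl : Function.Surjective (NormedSpace.inclusionInDoubleDual 𝕜 F))
    {T : E →L[𝕜] StrongDual 𝕜 F} (hT : IsClosed (T.range : Set (StrongDual 𝕜 F))) :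
    Set.range T = {ω : StrongDual 𝕜 F | ∀ u, T.flip u = 0 → ω u = 0} := by
  ext ω
  constructor
  · rintro ⟨v, rfl⟩ u hu
    exact DFunLike.congr_fun hu v
  · intro hω
    refine mem_of_isClosed_of_forall_dual_eq_zero hT fun f hf ↦ ?_
    obtain ⟨u, rfl⟩ := hrefl f
    exact hω u (ContinuousLinearMap.ext fun v ↦ hf (T v) ⟨v, rfl⟩)

end Annihilator

theorem exists_antilipschitzWith_of_isCoercive {E : Type*} [SeminormedAddCommGroup E]
    [NormedSpace ℝ E] {B : E →L[ℝ] E →L[ℝ] ℝ} (hB : IsCoercive B) :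
    ∃ k, AntilipschitzWith k B := by
  obtain ⟨δ, hδ, hcoer⟩ := hB
  refine (antilipschitzWith_iff_exists_mul_le_norm (f := B)).2 ⟨δ, hδ, fun u ↦ ?_⟩
  rcases (norm_nonneg u).eq_or_lt' with hu | hu
  · simp [hu]
  · refine le_of_mul_le_mul_right ?_ hu
    calc δ * ‖u‖ * ‖u‖ ≤ B u u := hcoer u
      _ ≤ ‖B u u‖ := Real.le_norm_self _
      _ ≤ ‖B u‖ * ‖u‖ := (B u).le_opNorm u

theorem stmt2_general {𝕜 X Y : Type*} [RCLike 𝕜] [NormedAddCommGroup X] [NormedSpace 𝕜 X]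
    [CompleteSpace X] [NormedAddCommGroup Y] [NormedSpace 𝕜 Y]
    (hrefl : Function.Surjective (NormedSpace.inclusionInDoubleDual 𝕜 Y))
    {L K M : X →L[𝕜] StrongDual 𝕜 Y} {Mt : Y →L[𝕜] StrongDual 𝕜 X} {k : NNReal}
    (hL : AntilipschitzWith k L) (hK : IsCompactOperator K) (hM : M = L + K)
    (hMt : ∀ u v, Mt u v = M v u) :
    Set.range M = {ω : StrongDual 𝕜 Y | ∀ u, Mt u = 0 → ω u = 0} := by
  obtain rfl : Mt = M.flip := by ext u v; exact hMt u v
  subst hM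
  exact range_eq_annihilator_ker_flip hrefl (isClosed_range_add_of_isCompactOperator hL hK)

/-- With `L` coercive, `K` compact, `M = L + K` and `Mᵗ` the transpose
`(Mᵗ u)(v) = (M v)(u)`, the range of `M` equals the annihilator of `ker Mᵗ`:
`Ran M = {ω ∈ X* : ω(u) = 0 for all u ∈ ker Mᵗ}`. -/
theorem stmt2 {X : Type*} [NormedAddCommGroup X] [NormedSpace ℝ X] [CompleteSpace X]
    (hrefl : Function.Bijective (NormedSpace.inclusionInDoubleDual ℝ X))
    (L K : X →L[ℝ] (X →L[ℝ] ℝ)) (δ : ℝ) (hδ : 0 < δ)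
    (hcoer : ∀ u : X, δ * ‖u‖ ^ 2 ≤ L u u)
    (hK : IsCompactOperator (⇑K))
    (M Mt : X →L[ℝ] (X →L[ℝ] ℝ))
    (hM : M = L + K)
    (hMt : ∀ u v : X, Mt u v = M v u) :
    Set.range (⇑M) = {ω : X →L[ℝ] ℝ | ∀ u : X, Mt u = 0 → ω u = 0} := by
  have hL : IsCoercive L := ⟨δ, hδ, fun u ↦ by simpa only [sq, mul_assoc] using hcoer u⟩
  obtain ⟨_, hLk⟩ := exists_antilipschitzWith_of_isCoercive hL
  exact stmt2_general hrefl.surjective hLk hK hM hMt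
end

section
/- Let H : ℝ³ → ℝ and M : ℝ³ → ℝ³ be C^∞ and 1-periodic in the second and third variables, and suppose that ∂₁H(x,y,z) = 0 and M₁(x,y,z) = 0 whenever x ∈ {0,1}. Then ∫_Σ [ H (∂_i M_i) + (∂_j H)(∂_j ∂_i M_i) + M_i (∂_i H) + (∂_j M_i)(∂_j ∂_i H) ] dx dy dz ≤ 0. (In fact this integral equals zero.) -/
/-!
Let `⟨u, v⟩ = u v + ∑ⱼ ∂ⱼu ∂ⱼv` be the pointwise `H¹` inner product. Partial derivatives commute, so
`∂ᵢ⟨u, v⟩ = ⟨∂ᵢu, v⟩ + ⟨u, ∂ᵢv⟩`, and the integrand `⟨H, div M⟩ + ∑ᵢ ⟨Mᵢ, ∂ᵢH⟩` is the divergence of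
the flux `i ↦ ⟨H, Mᵢ⟩`. On a face where `∂ᵢH` and `Mᵢ` vanish, the tangential derivatives of `Mᵢ`
vanish too, hence so does `⟨H, Mᵢ⟩`; on identified faces periodicity makes the two fluxes cancel.
The divergence theorem therefore gives that the integral is zero.
-/

open MeasureTheory

/-- Partial derivative in the `i`-th coordinate direction (coordinates `x,y,z ↔ 0,1,2`). -/
noncomputable def pd (i : Fin 3) (f : (Fin 3 → ℝ) → ℝ) : (Fin 3 → ℝ) → ℝ :=
  fun p => fderiv ℝ f p (Pi.single i 1)

/-- 1-periodicity in the second and third variables. -/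
def PerYZ (f : (Fin 3 → ℝ) → ℝ) : Prop :=
  ∀ p : Fin 3 → ℝ, f (p + Pi.single 1 1) = f p ∧ f (p + Pi.single 2 1) = f p

/-- The unit cube in `ℝ³`, the fundamental domain of `Σ = (0,1) × T²`. -/
def Cube : Set (Fin 3 → ℝ) := Set.Icc 0 1

/-- The partial derivative `∂ᵢ f` of a function on `ℝ^ι`, encoded as in `pd` by `fderiv`, but in
arbitrary finite dimension and for vector-valued functions. -/
noncomputable def partialDeriv {ι E : Type*} [Fintype ι] [DecidableEq ι] [NormedAddCommGroup E]
    [NormedSpace ℝ E] (i : ι) (f : (ι → ℝ) → E) : (ι → ℝ) → E :=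
  fun p => fderiv ℝ f p (Pi.single i 1)

/-- The divergence `∑ᵢ ∂ᵢFᵢ` of a family of functions on `ℝ^ι`; for real values it is the divergence
of the vector field with components `Fᵢ`. -/
noncomputable def divergence {ι E : Type*} [Fintype ι] [DecidableEq ι] [NormedAddCommGroup E]
    [NormedSpace ℝ E] (F : ι → (ι → ℝ) → E) : (ι → ℝ) → E :=
  fun p => ∑ i, partialDeriv i (F i) p

/-- The pointwise `H¹` inner product `u v + ∑ⱼ ∂ⱼu ∂ⱼv`, whose integral is the inner product of `u`
and `v` in the Sobolev space `H¹`. -/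
noncomputable def h1Density {ι : Type*} [Fintype ι] [DecidableEq ι] (u v : (ι → ℝ) → ℝ) :
    (ι → ℝ) → ℝ :=
  fun p => u p * v p + ∑ j, partialDeriv j u p * partialDeriv j v p

section PartialDeriv

variable {ι E : Type*} [Fintype ι] [DecidableEq ι] [NormedAddCommGroup E] [NormedSpace ℝ E]
  {f : (ι → ℝ) → E}

theorem contDiff_partialDeriv {m n : WithTop ℕ∞} (hf : ContDiff ℝ n f) (hmn : m + 1 ≤ n) (i : ι) :
    ContDiff ℝ m (partialDeriv i f) :=
  (hf.fderiv_right hmn).clm_apply contDiff_const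

theorem differentiable_partialDeriv (hf : ContDiff ℝ 2 f) (i : ι) :
    Differentiable ℝ (partialDeriv i f) :=
  (contDiff_partialDeriv hf one_add_one_eq_two.le i).differentiable one_ne_zero

theorem periodic_partialDeriv {c : ι → ℝ} (hf : Function.Periodic f c) (i : ι) :
    Function.Periodic (partialDeriv i f) c := fun p => by
  simp only [partialDeriv, ← fderiv_comp_add_right, hf _]

theorem partialDeriv_comm {p : ι → ℝ} (hf : ContDiffAt ℝ 2 f p) (i j : ι) :
    partialDeriv i (partialDeriv j f) p = partialDeriv j (partialDeriv i f) p := by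
  have hd : DifferentiableAt ℝ (fderiv ℝ f) p :=
    (hf.fderiv_right (m := 1) one_add_one_eq_two.le).differentiableAt one_ne_zero
  have second_eq (k l : ι) : partialDeriv k (partialDeriv l f) p =
      fderiv ℝ (fderiv ℝ f) p (Pi.single k 1) (Pi.single l 1) := by
    unfold partialDeriv
    simp [fderiv_clm_apply hd (differentiableAt_const _)]
  rw [second_eq, second_eq]
  exact hf.isSymmSndFDerivAt (by simp) _ _

theorem partialDeriv_fun_add {g : (ι → ℝ) → E} {p : ι → ℝ} (hf : DifferentiableAt ℝ f p)
    (hg : DifferentiableAt ℝ g p) (i : ι) :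
    partialDeriv i (fun q => f q + g q) p = partialDeriv i f p + partialDeriv i g p := by
  simp [partialDeriv, fderiv_fun_add hf hg]

theorem partialDeriv_fun_sum {κ : Type*} {s : Finset κ} {g : κ → (ι → ℝ) → E} {p : ι → ℝ}
    (hg : ∀ k ∈ s, DifferentiableAt ℝ (g k) p) (i : ι) :
    partialDeriv i (fun q => ∑ k ∈ s, g k q) p = ∑ k ∈ s, partialDeriv i (g k) p := by
  simp [partialDeriv, fderiv_fun_sum hg]

theorem partialDeriv_fun_mul {u v : (ι → ℝ) → ℝ} {p : ι → ℝ} (hu : DifferentiableAt ℝ u p)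
    (hv : DifferentiableAt ℝ v p) (i : ι) :
    partialDeriv i (fun q => u q * v q) p =
      partialDeriv i u p * v p + u p * partialDeriv i v p := by
  simp only [partialDeriv, fderiv_fun_mul hu hv, add_apply, smul_apply, smul_eq_mul]
  ring

theorem partialDeriv_eq_zero_of_const_on_hyperplane {p : ι → ℝ} {i j : ι}
    (hf : DifferentiableAt ℝ f p) (hij : i ≠ j) (hconst : ∀ q, q i = p i → f q = f p) :
    partialDeriv j f p = 0 := by
  have const_on_line (t : ℝ) : f (p + t • Pi.single j 1) = f p := hconst _ (by simp [hij])
  rw [partialDeriv, ← hf.lineDeriv_eq_fderiv]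
  simp only [lineDeriv, const_on_line, deriv_const]

end PartialDeriv

theorem integral_divergence_eq_zero_of_opposite_faces_eq {E : Type*} [NormedAddCommGroup E]
    [NormedSpace ℝ E] {n : ℕ} {a b : Fin (n + 1) → ℝ} (hab : a ≤ b)
    {F : Fin (n + 1) → (Fin (n + 1) → ℝ) → E} (hF : ∀ i, ContDiff ℝ 1 (F i))
    (hface : ∀ i x, F i (i.insertNth (b i) x) = F i (i.insertNth (a i) x)) :
    ∫ p in Set.Icc a b, divergence F p = 0 := by
  have integrableOn_divergence : IntegrableOn (divergence F) (Set.Icc a b) :=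
    (continuous_finsetSum _ fun i _ =>
      (contDiff_partialDeriv (hF i) (zero_add 1).le i).continuous).integrableOn_Icc
  refine (integral_divergence_of_hasFDerivAt_off_countable' a b hab F (fun i => fderiv ℝ (F i)) ∅
    Set.countable_empty (fun i => (hF i).continuous.continuousOn)
    (fun p _ i => ((hF i).differentiable one_ne_zero p).hasFDerivAt)
    integrableOn_divergence).trans ?_
  exact Finset.sum_eq_zero fun i _ => by simp only [hface, sub_self]

section H1Density

variable {ι : Type*} [Fintype ι] [DecidableEq ι] {u v : (ι → ℝ) → ℝ}

theorem h1Density_comm (u v : (ι → ℝ) → ℝ) : h1Density u v = h1Density v u := by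
  unfold h1Density
  simp only [mul_comm]

theorem contDiff_h1Density {m n : WithTop ℕ∞} (hu : ContDiff ℝ n u) (hv : ContDiff ℝ n v)
    (hmn : m + 1 ≤ n) : ContDiff ℝ m (h1Density u v) :=
  have hm : m ≤ n := le_self_add.trans hmn
  ((hu.of_le hm).mul (hv.of_le hm)).add <| ContDiff.sum fun j _ =>
    (contDiff_partialDeriv hu hmn j).mul (contDiff_partialDeriv hv hmn j)

theorem periodic_h1Density {c : ι → ℝ} (hu : Function.Periodic u c) (hv : Function.Periodic v c) :
    Function.Periodic (h1Density u v) c := fun p => by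
  simp only [h1Density, hu p, hv p, periodic_partialDeriv hu _ p, periodic_partialDeriv hv _ p]

theorem h1Density_fun_sum_right {κ : Type*} {s : Finset κ} {w : κ → (ι → ℝ) → ℝ} {p : ι → ℝ}
    (u : (ι → ℝ) → ℝ) (hw : ∀ k ∈ s, DifferentiableAt ℝ (w k) p) :
    h1Density u (fun q => ∑ k ∈ s, w k q) p = ∑ k ∈ s, h1Density u (w k) p := by
  simp only [h1Density, partialDeriv_fun_sum hw, Finset.mul_sum, Finset.sum_add_distrib]
  rw [Finset.sum_comm]

theorem partialDeriv_h1Density (hu : ContDiff ℝ 2 u) (hv : ContDiff ℝ 2 v) (i : ι) (p : ι → ℝ) :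
    partialDeriv i (h1Density u v) p =
      h1Density (partialDeriv i u) v p + h1Density u (partialDeriv i v) p := by
  have hud : DifferentiableAt ℝ u p := hu.differentiable two_ne_zero p
  have hvd : DifferentiableAt ℝ v p := hv.differentiable two_ne_zero p
  have hdu (j : ι) : DifferentiableAt ℝ (partialDeriv j u) p := differentiable_partialDeriv hu j p
  have hdv (j : ι) : DifferentiableAt ℝ (partialDeriv j v) p := differentiable_partialDeriv hv j p
  have sum_rule : partialDeriv i (h1Density u v) p = partialDeriv i (fun q => u q * v q) p +
      ∑ j, partialDeriv i (fun q => partialDeriv j u q * partialDeriv j v q) p := by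
    have diff_term (j : ι) (_ : j ∈ Finset.univ) :
        DifferentiableAt ℝ (fun q => partialDeriv j u q * partialDeriv j v q) p :=
      (hdu j).fun_mul (hdv j)
    rw [← partialDeriv_fun_sum diff_term]
    exact partialDeriv_fun_add (hud.fun_mul hvd) (.fun_sum diff_term) i
  simp only [sum_rule, partialDeriv_fun_mul hud hvd, partialDeriv_fun_mul (hdu _) (hdv _),
    partialDeriv_comm hu.contDiffAt i, partialDeriv_comm hv.contDiffAt i, h1Density,
    Finset.sum_add_distrib]
  ring

theorem divergence_h1Density {M : ι → (ι → ℝ) → ℝ} (hu : ContDiff ℝ 2 u)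
    (hM : ∀ i, ContDiff ℝ 2 (M i)) (p : ι → ℝ) :
    divergence (fun i => h1Density u (M i)) p =
      h1Density u (divergence M) p + ∑ i, h1Density (M i) (partialDeriv i u) p := by
  calc
    divergence (fun i => h1Density u (M i)) p
      = ∑ i, (h1Density (partialDeriv i u) (M i) p + h1Density u (partialDeriv i (M i)) p) :=
        Finset.sum_congr rfl fun i _ => partialDeriv_h1Density hu (hM i) i p
    _ = ∑ i, h1Density u (partialDeriv i (M i)) p + ∑ i, h1Density (M i) (partialDeriv i u) p := by
        simp only [Finset.sum_add_distrib, h1Density_comm (M _), add_comm]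
    _ = h1Density u (divergence M) p + ∑ i, h1Density (M i) (partialDeriv i u) p := by
        rw [← h1Density_fun_sum_right u fun i _ => differentiable_partialDeriv (hM i) i p]
        rfl

theorem h1Density_eq_zero_of_normal_deriv_eq_zero {p : ι → ℝ} {i : ι} (hv : DifferentiableAt ℝ v p)
    (hup : partialDeriv i u p = 0) (hvp : ∀ q, q i = p i → v q = 0) : h1Density u v p = 0 := by
  have tangential (j : ι) (hj : j ≠ i) : partialDeriv j v p = 0 :=
    partialDeriv_eq_zero_of_const_on_hyperplane hv hj.symm fun q hq => by rw [hvp q hq, hvp p rfl]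
  have gradient_term (j : ι) : partialDeriv j u p * partialDeriv j v p = 0 := by
    by_cases hj : j = i
    · rw [hj, hup, zero_mul]
    · rw [tangential j hj, mul_zero]
  simp only [h1Density, hvp p rfl, gradient_term, mul_zero, Finset.sum_const_zero, add_zero]

end H1Density

theorem insertNth_eq_insertNth_add_single {n : ℕ} (i : Fin (n + 1)) (s t : ℝ) (x : Fin n → ℝ) :
    (i.insertNth t x : Fin (n + 1) → ℝ) = i.insertNth s x + Pi.single i (t - s) := by
  rw [← sub_eq_iff_eq_add', Fin.insertNth_sub_same]

theorem stmt8_general {n : ℕ} {a b : Fin (n + 1) → ℝ} (hab : a ≤ b)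
    {H : (Fin (n + 1) → ℝ) → ℝ} {M : Fin (n + 1) → (Fin (n + 1) → ℝ) → ℝ}
    (hH : ContDiff ℝ 2 H) (hM : ∀ i, ContDiff ℝ 2 (M i))
    (hbc : ∀ i, (Function.Periodic H (Pi.single i (b i - a i)) ∧
        Function.Periodic (M i) (Pi.single i (b i - a i))) ∨
      ∀ p, p i = a i ∨ p i = b i → partialDeriv i H p = 0 ∧ M i p = 0) :
    ∫ p in Set.Icc a b, (h1Density H (divergence M) p +
      ∑ i, h1Density (M i) (partialDeriv i H) p) = 0 := by
  have flux_faces_eq (i) (x : Fin n → ℝ) : h1Density H (M i) (i.insertNth (b i) x) =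
      h1Density H (M i) (i.insertNth (a i) x) := by
    rcases hbc i with ⟨hHper, hMper⟩ | hwall
    · rw [insertNth_eq_insertNth_add_single i (a i) (b i)]
      exact periodic_h1Density hHper hMper _
    · have flux_eq_zero (p) (hp : p i = a i ∨ p i = b i) : h1Density H (M i) p = 0 :=
        h1Density_eq_zero_of_normal_deriv_eq_zero ((hM i).differentiable two_ne_zero p)
          (hwall p hp).1 fun q hq => (hwall q (hq ▸ hp)).2
      rw [flux_eq_zero _ (by simp), flux_eq_zero _ (by simp)]
  simp only [← divergence_h1Density hH hM]
  exact integral_divergence_eq_zero_of_opposite_faces_eq hab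
    (fun i => contDiff_h1Density hH (hM i) one_add_one_eq_two.le) flux_faces_eq

theorem PerYZ.periodic {f : (Fin 3 → ℝ) → ℝ} (hf : PerYZ f) {i : Fin 3} (hi : i ≠ 0) :
    Function.Periodic f (Pi.single i 1) := by
  fin_cases i
  · exact absurd rfl hi
  · exact fun p => (hf p).1
  · exact fun p => (hf p).2

/-- Dissipativity of the constraint propagation operator: for smooth
fields `H`, `M` on `Σ = (0,1) × T²` with `∂₁H = 0` and `M₁ = 0` on the faces `x ∈ {0,1}`,
`∫_Σ [H ∂ᵢMᵢ + (∂ⱼH)(∂ⱼ∂ᵢMᵢ) + Mᵢ ∂ᵢH + (∂ⱼMᵢ)(∂ⱼ∂ᵢH)] ≤ 0`. -/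
theorem stmt8
    (H : (Fin 3 → ℝ) → ℝ) (M : Fin 3 → (Fin 3 → ℝ) → ℝ)
    (hHs : ContDiff ℝ (⊤ : ℕ∞) H) (hMs : ∀ i, ContDiff ℝ (⊤ : ℕ∞) (M i))
    (hHp : PerYZ H) (hMp : ∀ i, PerYZ (M i))
    (hbc : ∀ p : Fin 3 → ℝ, p 0 = 0 ∨ p 0 = 1 → pd 0 H p = 0 ∧ M 0 p = 0) :
    (∫ p in Cube,
      (H p * (∑ i, pd i (M i) p)
        + ∑ j, pd j H p * pd j (fun q => ∑ i, pd i (M i) q) p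
        + ∑ i, M i p * pd i H p
        + ∑ i, ∑ j, pd j (M i) p * pd j (pd i H) p)) ≤ 0 := by
  have integral_eq_zero := stmt8_general zero_le_one (mod_cast contDiff_infty.1 hHs 2)
    (fun i => mod_cast contDiff_infty.1 (hMs i) 2) fun i => (ne_or_eq i 0).imp
      (fun hi => by simpa using And.intro (hHp.periodic hi) ((hMp i).periodic hi))
      (by rintro rfl; exact hbc)
  simp only [h1Density, Finset.sum_add_distrib, ← add_assoc] at integral_eq_zero
  exact integral_eq_zero.le
end

section
/- For every ε > 0 and every pair G₀, G₁ : ℝ² → ℝ of C^∞ functions which are 1-periodic in both variables, there exists a symmetric tensor field h (a C^∞ map from ℝ³ to symmetric real 3×3 matrices, 1-periodic in the second and third variables) such that ∂₁(Ham h)(0,y,z) = G₀(y,z) and ∂₁(Ham h)(1,y,z) = G₁(y,z) for all (y,z) ∈ ℝ², and such that ∫_Σ Σ_{i,j} ( h_{ij}² + Σ_k (∂_k h_{ij})² ) < ε², ∫_Σ Σ_{i,j} (Ric h)_{ij}² < ε², and ∫_Σ ( (Ham h)² + Σ_k (∂_k Ham h)² ) < ε². -/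
open MeasureTheory

/-- 1-periodicity in both variables, for functions on `ℝ²`. -/
def PerBoth {α : Type*} (G : (Fin 2 → ℝ) → α) : Prop :=
  ∀ q : Fin 2 → ℝ, G (q + Pi.single 0 1) = G q ∧ G (q + Pi.single 1 1) = G q

/-- The linearized Ricci operator
`(Ric h)_{ij} = ½(∂ᵢ∂ₐh_{jа} + ∂ⱼ∂ₐh_{ia} - ∂ₐ∂ₐh_{ij} - ∂ᵢ∂ⱼh_{aa})`. -/
noncomputable def ricT (h : Fin 3 → Fin 3 → (Fin 3 → ℝ) → ℝ) (i j : Fin 3) :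
    (Fin 3 → ℝ) → ℝ :=
  fun p => (∑ a, (pd i (pd a (h j a)) p + pd j (pd a (h i a)) p
    - pd a (pd a (h i j)) p - pd i (pd j (h a a)) p)) / 2

/-- The linearized Hamiltonian operator `Ham h = ½(∂ᵢ∂ⱼh_{ij} - ∂ₐ∂ₐh_{jj})`. -/
noncomputable def hamT (h : Fin 3 → Fin 3 → (Fin 3 → ℝ) → ℝ) : (Fin 3 → ℝ) → ℝ :=
  fun p => ((∑ i, ∑ j, pd i (pd j (h i j)) p) - ∑ a, ∑ j, pd a (pd a (h j j)) p) / 2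

/-!
For `h = u δ` one has `Ham h = -Δu`, while `Ric h` only involves second derivatives of `u`. So `u`
is taken to be a sum of boundary layers `(n + 1)⁻³ φ((n + 1)(x - c)) G(y, z)`, one for each face
`x = c`, where `φ` is supported in `(-1, 1)` with `φ'(0) = 0` and `φ'''(0) = -1`. On the face the
value of `∂₁(Ham h)` is then `G` for every `n`, whereas away from it all derivatives of `u` of
order at most `3` tend to zero, boundedly: dominated convergence makes the integrals small.
-/

open Filter Topology
open scoped ContDiff

section VanishesBoundedly

variable {E : Type*} [NormedAddCommGroup E] [NormedSpace ℝ E]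

/-- A sequence of smooth functions whose derivatives of order at most `k` are uniformly bounded
and tend to zero `μ`-almost everywhere: the hypotheses of dominated convergence on a finite
measure space, for all these derivatives at once. -/
structure VanishesBoundedly [MeasurableSpace E] (μ : Measure E) (k : ℕ) (u : ℕ → E → ℝ) :
    Prop where
  contDiff : ∀ n, ContDiff ℝ ∞ (u n)
  bounded : ∃ C, ∀ᵐ p ∂μ, ∀ m ≤ k, ∀ n, ‖iteratedFDeriv ℝ m (u n) p‖ ≤ C
  tendsto : ∀ᵐ p ∂μ, ∀ m ≤ k, Tendsto (fun n => ‖iteratedFDeriv ℝ m (u n) p‖) atTop (𝓝 0)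

lemma exists_bound_iteratedFDeriv_of_isCompact {K : Set E} (hK : IsCompact K) {g : E → ℝ}
    (hg : ContDiff ℝ ∞ g) (k : ℕ) :
    ∃ C, ∀ p ∈ K, ∀ m ≤ k, ‖iteratedFDeriv ℝ m g p‖ ≤ C := by
  have hbound (m : ℕ) : ∃ C, ∀ p ∈ K, ‖iteratedFDeriv ℝ m g p‖ ≤ C :=
    hK.exists_bound_of_continuousOn
      (hg.continuous_iteratedFDeriv (by exact_mod_cast le_top)).continuousOn
  choose C hC using hbound
  refine ⟨∑ m ∈ Finset.range (k + 1), |C m|, fun p hp m hm => ?_⟩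
  calc ‖iteratedFDeriv ℝ m g p‖ ≤ |C m| := (hC m p hp).trans (le_abs_self _)
    _ ≤ ∑ m ∈ Finset.range (k + 1), |C m| :=
      Finset.single_le_sum (f := fun m => |C m|) (fun _ _ => abs_nonneg _)
        (Finset.mem_range_succ_iff.2 hm)

namespace VanishesBoundedly

variable [MeasurableSpace E] {μ : Measure E} {k l : ℕ} {u v w : ℕ → E → ℝ}

lemma zero : VanishesBoundedly μ k (fun _ => (0 : E → ℝ)) where
  contDiff _ := contDiff_const
  bounded := ⟨0, .of_forall fun p m _ _ => by simp⟩
  tendsto := .of_forall fun p m _ => by simp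

lemma mono (hu : VanishesBoundedly μ l u) (hkl : k ≤ l) : VanishesBoundedly μ k u where
  contDiff := hu.contDiff
  bounded := hu.bounded.imp fun _ hC => hC.mono fun _ hp m hm => hp m (hm.trans hkl)
  tendsto := hu.tendsto.mono fun _ hp m hm => hp m (hm.trans hkl)

lemma of_norm_iteratedFDeriv_le (hu : VanishesBoundedly μ l u) (hw : ∀ n, ContDiff ℝ ∞ (w n))
    {A : ℝ} (hA : 0 ≤ A) (h : ∀ᵐ p ∂μ, ∀ m ≤ k, ∀ n, ‖iteratedFDeriv ℝ m (w n) p‖ ≤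
      A * ∑ j ∈ Finset.range (l + 1), ‖iteratedFDeriv ℝ j (u n) p‖) :
    VanishesBoundedly μ k w := by
  obtain ⟨C, hC⟩ := hu.bounded
  refine ⟨hw, ⟨A * ∑ _j ∈ Finset.range (l + 1), C, ?_⟩, ?_⟩
  · filter_upwards [h, hC] with p hp hCp m hm n
    refine (hp m hm n).trans (mul_le_mul_of_nonneg_left (Finset.sum_le_sum fun j hj => ?_) hA)
    exact hCp j (Finset.mem_range_succ_iff.1 hj) n
  · filter_upwards [h, hu.tendsto] with p hp htend m hm
    refine squeeze_zero (fun _ => norm_nonneg _) (hp m hm) ?_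
    simpa using (tendsto_finsetSum _ fun j hj =>
      htend j (Finset.mem_range_succ_iff.1 hj)).const_mul A

lemma add (hu : VanishesBoundedly μ k u) (hv : VanishesBoundedly μ k v) :
    VanishesBoundedly μ k (fun n => u n + v n) := by
  obtain ⟨C, hC⟩ := hu.bounded
  obtain ⟨D, hD⟩ := hv.bounded
  have triangle (m n : ℕ) (p : E) : ‖iteratedFDeriv ℝ m (u n + v n) p‖ ≤
      ‖iteratedFDeriv ℝ m (u n) p‖ + ‖iteratedFDeriv ℝ m (v n) p‖ := by
    rw [iteratedFDeriv_add_apply (contDiff_infty.1 (hu.contDiff n) m).contDiffAt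
      (contDiff_infty.1 (hv.contDiff n) m).contDiffAt]
    exact norm_add_le _ _
  refine ⟨fun n => (hu.contDiff n).add (hv.contDiff n), ⟨C + D, ?_⟩, ?_⟩
  · filter_upwards [hC, hD] with p hCp hDp m hm n
    exact (triangle m n p).trans (add_le_add (hCp m hm n) (hDp m hm n))
  · filter_upwards [hu.tendsto, hv.tendsto] with p hup hvp m hm
    refine squeeze_zero (fun _ => norm_nonneg _) (triangle m · p) ?_
    simpa using (hup m hm).add (hvp m hm)

lemma sum {ι : Type*} (s : Finset ι) {u : ι → ℕ → E → ℝ}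
    (hu : ∀ i ∈ s, VanishesBoundedly μ k (u i)) :
    VanishesBoundedly μ k (fun n p => ∑ i ∈ s, u i n p) := by
  classical
  induction s using Finset.induction_on with
  | empty =>
    simp only [Finset.sum_empty]
    exact zero
  | insert a s ha ih =>
    simp only [Finset.sum_insert ha]
    exact (hu a (Finset.mem_insert_self a s)).add
      (ih fun i hi => hu i (Finset.mem_insert_of_mem hi))

lemma mul_of_bounded (hu : VanishesBoundedly μ k u) (hv : ∀ n, ContDiff ℝ ∞ (v n))
    (hbound : ∃ C, ∀ᵐ p ∂μ, ∀ m ≤ k, ∀ n, ‖iteratedFDeriv ℝ m (v n) p‖ ≤ C) :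
    VanishesBoundedly μ k (fun n p => u n p * v n p) := by
  obtain ⟨C, hC⟩ := hbound
  refine hu.of_norm_iteratedFDeriv_le (A := 2 ^ k * |C|) (fun n => (hu.contDiff n).mul (hv n))
    (by positivity) ?_
  filter_upwards [hC] with p hCp m hm n
  have choose_le (j : ℕ) : (m.choose j : ℝ) ≤ 2 ^ k := by
    exact_mod_cast (Nat.choose_le_two_pow m j).trans (Nat.pow_le_pow_right two_pos hm)
  have norm_v_le (j : ℕ) : ‖iteratedFDeriv ℝ (m - j) (v n) p‖ ≤ |C| :=
    (hCp (m - j) (by omega) n).trans (le_abs_self C)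
  calc ‖iteratedFDeriv ℝ m (fun p => u n p * v n p) p‖
      ≤ ∑ j ∈ Finset.range (m + 1), (m.choose j : ℝ) * ‖iteratedFDeriv ℝ j (u n) p‖ *
          ‖iteratedFDeriv ℝ (m - j) (v n) p‖ :=
        norm_iteratedFDeriv_mul_le (hu.contDiff n) (hv n) p (by exact_mod_cast le_top)
    _ ≤ ∑ j ∈ Finset.range (m + 1), 2 ^ k * ‖iteratedFDeriv ℝ j (u n) p‖ * |C| := by
        gcongr with j
        exacts [choose_le j, norm_v_le j]
    _ ≤ ∑ j ∈ Finset.range (k + 1), 2 ^ k * ‖iteratedFDeriv ℝ j (u n) p‖ * |C| :=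
        Finset.sum_le_sum_of_subset_of_nonneg (Finset.range_mono (by omega))
          fun _ _ _ => by positivity
    _ = 2 ^ k * |C| * ∑ j ∈ Finset.range (k + 1), ‖iteratedFDeriv ℝ j (u n) p‖ := by
        rw [Finset.mul_sum]
        exact Finset.sum_congr rfl fun _ _ => by ring

lemma sq (hu : VanishesBoundedly μ k u) : VanishesBoundedly μ k (fun n p => u n p ^ 2) := by
  simpa only [pow_two] using hu.mul_of_bounded hu.contDiff hu.bounded

lemma const_mul (hu : VanishesBoundedly μ k u) (c : ℝ) :
    VanishesBoundedly μ k (fun n p => c * u n p) := by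
  have hc : VanishesBoundedly μ k (fun n p => u n p * c) := by
    refine hu.mul_of_bounded (fun _ => contDiff_const) ⟨‖c‖, .of_forall fun p m _ _ => ?_⟩
    rcases m with _ | m
    · simp
    · simp [iteratedFDeriv_succ_const]
  simpa only [mul_comm c] using hc

lemma mul_restrict_isCompact {K : Set E} (hK : IsCompact K) (hKm : MeasurableSet K)
    (hu : VanishesBoundedly (μ.restrict K) k u) {g : E → ℝ} (hg : ContDiff ℝ ∞ g) :
    VanishesBoundedly (μ.restrict K) k (fun n p => u n p * g p) := by
  obtain ⟨C, hC⟩ := exists_bound_iteratedFDeriv_of_isCompact hK hg k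
  refine hu.mul_of_bounded (fun _ => hg) ⟨C, ?_⟩
  filter_upwards [ae_restrict_mem hKm] with p hp m hm _ using hC p hp m hm

lemma fderiv_apply (hu : VanishesBoundedly μ (k + 1) u) (v : E) :
    VanishesBoundedly μ k (fun n p => fderiv ℝ (u n) p v) := by
  have hfderiv (n : ℕ) : ContDiff ℝ ∞ (fderiv ℝ (u n)) := (hu.contDiff n).fderiv_right (by simp)
  refine hu.of_norm_iteratedFDeriv_le (A := ‖v‖)
    (fun n => (hfderiv n).clm_apply contDiff_const) (norm_nonneg v)
    (.of_forall fun p m hm n => ?_)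
  calc ‖iteratedFDeriv ℝ m (fun p => fderiv ℝ (u n) p v) p‖
      ≤ ‖v‖ * ‖iteratedFDeriv ℝ m (fderiv ℝ (u n)) p‖ :=
        norm_iteratedFDeriv_clm_apply_const (hfderiv n).contDiffAt (by exact_mod_cast le_top)
    _ = ‖v‖ * ‖iteratedFDeriv ℝ (m + 1) (u n) p‖ := by rw [norm_iteratedFDeriv_fderiv]
    _ ≤ ‖v‖ * ∑ j ∈ Finset.range (k + 1 + 1), ‖iteratedFDeriv ℝ j (u n) p‖ := by
        gcongr
        exact Finset.single_le_sum (f := fun j => ‖iteratedFDeriv ℝ j (u n) p‖)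
          (fun _ _ => norm_nonneg _) (Finset.mem_range.2 (by omega))

lemma comp_continuousLinearMap [BorelSpace E] {F : Type*} [NormedAddCommGroup F]
    [NormedSpace ℝ F] [MeasurableSpace F] [OpensMeasurableSpace F] {ν : Measure F} (L : F →L[ℝ] E)
    (hu : VanishesBoundedly (ν.map L) k u) : VanishesBoundedly ν k (fun n => u n ∘ L) := by
  have norm_comp_le (m n : ℕ) (p : F) : ‖iteratedFDeriv ℝ m (u n ∘ L) p‖ ≤
      ‖iteratedFDeriv ℝ m (u n) (L p)‖ * ‖L‖ ^ m := by
    rw [L.iteratedFDeriv_comp_right (hu.contDiff n) p (by exact_mod_cast le_top)]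
    simpa using ContinuousMultilinearMap.norm_compContinuousLinearMap_le
      (iteratedFDeriv ℝ m (u n) (L p)) fun _ => L
  have hL : AEMeasurable L ν := L.continuous.measurable.aemeasurable
  obtain ⟨C, hC⟩ := hu.bounded
  refine ⟨fun n => (hu.contDiff n).comp L.contDiff, ⟨|C| * (1 + ‖L‖) ^ k, ?_⟩, ?_⟩
  · filter_upwards [ae_of_ae_map hL hC] with p hp m hm n
    refine (norm_comp_le m n p).trans ?_
    gcongr
    · exact (hp m hm n).trans (le_abs_self C)
    · calc ‖L‖ ^ m ≤ (1 + ‖L‖) ^ m := by gcongr; linarith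
        _ ≤ (1 + ‖L‖) ^ k := by gcongr; linarith [norm_nonneg L]
  · filter_upwards [ae_of_ae_map hL hu.tendsto] with p hp m hm
    refine squeeze_zero (fun _ => norm_nonneg _) (norm_comp_le m · p) ?_
    simpa using (hp m hm).mul_const (‖L‖ ^ m)

lemma tendsto_integral [OpensMeasurableSpace E] [SecondCountableTopology E] [IsFiniteMeasure μ]
    (hu : VanishesBoundedly μ 0 u) :
    Tendsto (fun n => ∫ p, u n p ∂μ) atTop (𝓝 0) := by
  obtain ⟨C, hC⟩ := hu.bounded
  have hlim : ∀ᵐ p ∂μ, Tendsto (fun n => u n p) atTop (𝓝 0) :=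
    hu.tendsto.mono fun p hp =>
      tendsto_zero_iff_norm_tendsto_zero.2 (by simpa using hp 0 le_rfl)
  have hdom (n : ℕ) : ∀ᵐ p ∂μ, ‖u n p‖ ≤ C :=
    hC.mono fun p hp => by simpa using hp 0 le_rfl n
  simpa using tendsto_integral_of_dominated_convergence (fun _ => C)
    (fun n => (hu.contDiff n).continuous.aestronglyMeasurable) (integrable_const C) hdom hlim

end VanishesBoundedly

end VanishesBoundedly

section Concentrate

/-- The profile `φ` concentrated at `c` on the scale `1 / (n + 1)`, normalised so that its `k`-th
derivative at `c` does not depend on `n`. -/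
noncomputable def concentrate (φ : ℝ → ℝ) (k : ℕ) (c : ℝ) (n : ℕ) (x : ℝ) : ℝ :=
  φ ((n + 1) * (x - c)) / (n + 1) ^ k

variable {φ : ℝ → ℝ}

lemma contDiff_concentrate (hφ : ContDiff ℝ ∞ φ) (k : ℕ) (c : ℝ) (n : ℕ) :
    ContDiff ℝ ∞ (concentrate φ k c n) := by
  unfold concentrate
  fun_prop

lemma iteratedDeriv_concentrate (hφ : ContDiff ℝ ∞ φ) (k : ℕ) (c : ℝ) (n m : ℕ) (x : ℝ) :
    iteratedDeriv m (concentrate φ k c n) x =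
      (n + 1) ^ m * iteratedDeriv m φ ((n + 1) * (x - c)) / (n + 1) ^ k := by
  unfold concentrate
  rw [iteratedDeriv_div_const,
    iteratedDeriv_comp_sub_const m (fun y => φ ((n + 1 : ℝ) * y)) c,
    iteratedDeriv_comp_const_mul (contDiff_infty.1 hφ m)]

lemma iteratedDeriv_concentrate_self (hφ : ContDiff ℝ ∞ φ) (k : ℕ) (c : ℝ) (n : ℕ) :
    iteratedDeriv k (concentrate φ k c n) c = iteratedDeriv k φ 0 := by
  rw [iteratedDeriv_concentrate hφ, sub_self, mul_zero]
  field_simp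

lemma iteratedDeriv_eq_zero_of_notMem_tsupport {x : ℝ} (hx : x ∉ tsupport φ) (m : ℕ) :
    iteratedDeriv m φ x = 0 := by
  have h : iteratedFDeriv ℝ m φ x = 0 :=
    Function.notMem_support.1 fun hmem => hx (support_iteratedFDeriv_subset m hmem)
  rw [iteratedDeriv, h, zero_apply]

lemma iteratedDeriv_concentrate_eq_zero (hφ : ContDiff ℝ ∞ φ)
    (hsupp : tsupport φ ⊆ Metric.ball 0 1) (k m n : ℕ) {c x : ℝ} (hx : 1 ≤ (n + 1) * |x - c|) :
    iteratedDeriv m (concentrate φ k c n) x = 0 := by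
  have hout : (n + 1) * (x - c) ∉ tsupport φ := fun hmem => by
    have hlt := mem_ball_zero_iff.1 (hsupp hmem)
    rw [Real.norm_eq_abs, abs_mul, abs_of_pos n.cast_add_one_pos] at hlt
    exact hlt.not_ge hx
  rw [iteratedDeriv_concentrate hφ, iteratedDeriv_eq_zero_of_notMem_tsupport hout]
  simp

lemma abs_iteratedDeriv_concentrate_le (hφ : ContDiff ℝ ∞ φ) {k m : ℕ} (hm : m ≤ k) (c : ℝ)
    (n : ℕ) (x : ℝ) : |iteratedDeriv m (concentrate φ k c n) x| ≤
      |iteratedDeriv m φ ((n + 1) * (x - c))| := by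
  have hn : (1 : ℝ) ≤ n + 1 := le_add_of_nonneg_left n.cast_nonneg
  rw [iteratedDeriv_concentrate hφ, mul_div_right_comm, abs_mul, abs_of_nonneg (by positivity)]
  refine mul_le_of_le_one_left (abs_nonneg _) ((div_le_one (by positivity)).2 ?_)
  exact pow_le_pow_right₀ hn hm

lemma vanishesBoundedly_concentrate (hφ : ContDiff ℝ ∞ φ) (hsupp : tsupport φ ⊆ Metric.ball 0 1)
    (k : ℕ) (c : ℝ) {ν : Measure ℝ} (hν : ν {c} = 0) :
    VanishesBoundedly ν k (concentrate φ k c) := by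
  have hcpt : HasCompactSupport φ :=
    (isCompact_closedBall (0 : ℝ) 1).of_isClosed_subset (isClosed_tsupport φ)
      (hsupp.trans Metric.ball_subset_closedBall)
  refine ⟨contDiff_concentrate hφ k c, ?_, ?_⟩
  · obtain ⟨C, hC⟩ := exists_bound_iteratedFDeriv_of_isCompact hcpt hφ k
    refine ⟨|C|, .of_forall fun x m hm n => ?_⟩
    rw [norm_iteratedFDeriv_eq_norm_iteratedDeriv]
    refine (abs_iteratedDeriv_concentrate_le hφ hm c n x).trans ?_
    by_cases hmem : (n + 1) * (x - c) ∈ tsupport φ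
    · rw [← Real.norm_eq_abs, ← norm_iteratedFDeriv_eq_norm_iteratedDeriv]
      exact (hC _ hmem m hm).trans (le_abs_self C)
    · simp [iteratedDeriv_eq_zero_of_notMem_tsupport hmem]
  · have hne : ∀ᵐ x ∂ν, x ≠ c := compl_mem_ae_iff.2 hν
    filter_upwards [hne] with x hx m _
    have hfar : ∀ᶠ n : ℕ in atTop, 1 ≤ (n + 1) * |x - c| :=
      ((tendsto_natCast_atTop_atTop.atTop_add tendsto_const_nhds).atTop_mul_const
        (abs_pos.2 (sub_ne_zero.2 hx))).eventually_ge_atTop 1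
    refine tendsto_nhds_of_eventually_eq (hfar.mono fun n hn => ?_)
    rw [norm_iteratedFDeriv_eq_norm_iteratedDeriv,
      iteratedDeriv_concentrate_eq_zero hφ hsupp k m n hn, norm_zero]

lemma exists_contDiff_tsupport_subset_eventuallyEq {E : Type*} [NormedAddCommGroup E]
    [NormedSpace ℝ E] [FiniteDimensional ℝ E] {s : Set E} {x : E} (hs : s ∈ 𝓝 x) {f : E → ℝ}
    (hf : ContDiff ℝ ∞ f) : ∃ g : E → ℝ, ContDiff ℝ ∞ g ∧ tsupport g ⊆ s ∧ g =ᶠ[𝓝 x] f := by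
  obtain ⟨r, hr, hrs⟩ := Metric.nhds_basis_closedBall.mem_iff.1 hs
  let χ : ContDiffBump x := ⟨r / 2, r, half_pos hr, half_lt_self hr⟩
  refine ⟨fun y => χ y * f y, χ.contDiff.mul hf, ?_, ?_⟩
  · exact (tsupport_mul_subset_left (f := χ)).trans (χ.tsupport_eq.trans_subset hrs)
  · filter_upwards [χ.eventuallyEq_one] with y hy
    rw [hy, Pi.one_apply, one_mul]

lemma exists_profile_iteratedDeriv_eq (k : ℕ) (a : ℝ) :
    ∃ φ : ℝ → ℝ, ContDiff ℝ ∞ φ ∧ tsupport φ ⊆ Metric.ball 0 1 ∧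
      ∀ m, iteratedDeriv m φ 0 = if m = k then a else 0 := by
  obtain ⟨φ, hφ, hsupp, hgerm⟩ := exists_contDiff_tsupport_subset_eventuallyEq
    (Metric.ball_mem_nhds (0 : ℝ) one_pos) (f := fun t => a / k.factorial * t ^ k) (by fun_prop)
  refine ⟨φ, hφ, hsupp, fun m => ?_⟩
  rw [hgerm.iteratedDeriv_eq m, iteratedDeriv_const_mul_field, iteratedDeriv_fun_pow_zero]
  split_ifs <;> simp [Nat.factorial_ne_zero]

end Concentrate

section PartialDerivatives

variable {f g : (Fin 3 → ℝ) → ℝ}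

/-- The Euclidean Laplacian on `ℝ³`. -/
noncomputable def lap (f : (Fin 3 → ℝ) → ℝ) : (Fin 3 → ℝ) → ℝ :=
  fun p => ∑ a, pd a (pd a f) p

lemma contDiff_pd (i : Fin 3) (hf : ContDiff ℝ ∞ f) : ContDiff ℝ ∞ (pd i f) :=
  (hf.fderiv_right (by simp)).clm_apply contDiff_const

lemma contDiff_lap (hf : ContDiff ℝ ∞ f) : ContDiff ℝ ∞ (lap f) :=
  ContDiff.sum fun i _ => contDiff_pd i (contDiff_pd i hf)

lemma pd_zero (i : Fin 3) : pd i 0 = 0 := by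
  funext p
  simp [pd]

lemma pd_add (i : Fin 3) (hf : Differentiable ℝ f) (hg : Differentiable ℝ g) :
    pd i (f + g) = pd i f + pd i g := by
  funext p
  simp [pd, fderiv_add (hf p) (hg p)]

lemma pd_neg (i : Fin 3) (f : (Fin 3 → ℝ) → ℝ) : pd i (-f) = -pd i f := by
  funext p
  simp [pd, fderiv_neg]

lemma pd_mul (i : Fin 3) (hf : Differentiable ℝ f) (hg : Differentiable ℝ g) :
    pd i (f * g) = pd i f * g + f * pd i g := by
  funext p
  simp only [pd, fderiv_mul (hf p) (hg p), add_apply, smul_apply, smul_eq_mul, Pi.add_apply,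
    Pi.mul_apply]
  ring

lemma pd_comm (i j : Fin 3) (hf : ContDiff ℝ 2 f) : pd i (pd j f) = pd j (pd i f) := by
  funext p
  have hdiff : DifferentiableAt ℝ (fderiv ℝ f) p :=
    (hf.fderiv_right (m := 1) (by norm_num)).differentiable (by simp) p
  have pd_pd_eq (a b : Fin 3) : pd a (pd b f) p =
      fderiv ℝ (fderiv ℝ f) p (Pi.single a 1) (Pi.single b 1) := by
    unfold pd
    rw [fderiv_clm_apply hdiff (differentiableAt_const _)]
    simp
  rw [pd_pd_eq, pd_pd_eq]
  exact hf.contDiffAt.isSymmSndFDerivAt (by simp) _ _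

lemma lap_add (hf : ContDiff ℝ ∞ f) (hg : ContDiff ℝ ∞ g) : lap (f + g) = lap f + lap g := by
  funext p
  have pd_pd_add (i : Fin 3) : pd i (pd i (f + g)) = pd i (pd i f) + pd i (pd i g) := by
    rw [pd_add i (hf.differentiable (by simp)) (hg.differentiable (by simp)),
      pd_add i ((contDiff_pd i hf).differentiable (by simp))
        ((contDiff_pd i hg).differentiable (by simp))]
  simp only [lap, pd_pd_add, Pi.add_apply, Finset.sum_add_distrib]

lemma pd_lap (i : Fin 3) (hf : ContDiff ℝ ∞ f) : pd i (lap f) = lap (pd i f) := by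
  have hdiff (a : Fin 3) : Differentiable ℝ (pd a (pd a f)) :=
    (contDiff_pd a (contDiff_pd a hf)).differentiable (by simp)
  have hcomm {g : (Fin 3 → ℝ) → ℝ} (hg : ContDiff ℝ ∞ g) (a : Fin 3) :
      pd i (pd a g) = pd a (pd i g) :=
    pd_comm i a (contDiff_infty.1 hg 2)
  have hlap : ∀ g, lap g = pd 0 (pd 0 g) + pd 1 (pd 1 g) + pd 2 (pd 2 g) := fun g => by
    funext p
    exact Fin.sum_univ_three _
  rw [hlap, hlap, pd_add i ((hdiff 0).add (hdiff 1)) (hdiff 2), pd_add i (hdiff 0) (hdiff 1)]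
  simp only [hcomm (contDiff_pd _ hf), hcomm hf]

variable {φ : ℝ → ℝ}

lemma pd_comp_apply_zero (i : Fin 3) (hφ : Differentiable ℝ φ) :
    pd i (fun p => φ (p 0)) =
      if i = 0 then (fun p => deriv φ (p 0) : (Fin 3 → ℝ) → ℝ) else 0 := by
  funext p
  have hcomp : HasFDerivAt (fun p : Fin 3 → ℝ => φ (p 0)) _ p :=
    (hφ (p 0)).hasDerivAt.hasFDerivAt.comp p (hasFDerivAt_apply (𝕜 := ℝ) (0 : Fin 3) p)
  rw [pd, hcomp.fderiv]
  split_ifs with hi <;> simp [hi, eq_comm]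

lemma differentiable_comp_apply_zero (hφ : Differentiable ℝ φ) :
    Differentiable ℝ fun p : Fin 3 → ℝ => φ (p 0) :=
  hφ.comp (differentiable_apply 0)

lemma pd_zero_comp_apply_zero_mul (hφ : Differentiable ℝ φ) (hg : Differentiable ℝ g)
    (hg₀ : pd 0 g = 0) :
    pd 0 ((fun p => φ (p 0)) * g) = (fun p => deriv φ (p 0)) * g := by
  rw [pd_mul 0 (differentiable_comp_apply_zero hφ) hg, pd_comp_apply_zero 0 hφ, hg₀, if_pos rfl,
    mul_zero, add_zero]

lemma pd_comp_apply_zero_mul_of_ne {i : Fin 3} (hi : i ≠ 0) (hφ : Differentiable ℝ φ)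
    (hg : Differentiable ℝ g) :
    pd i ((fun p => φ (p 0)) * g) = (fun p => φ (p 0)) * pd i g := by
  rw [pd_mul i (differentiable_comp_apply_zero hφ) hg, pd_comp_apply_zero i hφ, if_neg hi,
    zero_mul, zero_add]

lemma lap_comp_apply_zero_mul (hφ : ContDiff ℝ ∞ φ) (hg : ContDiff ℝ ∞ g) (hg₀ : pd 0 g = 0) :
    lap ((fun p => φ (p 0)) * g) =
      (fun p => deriv (deriv φ) (p 0)) * g + (fun p => φ (p 0)) * lap g := by
  have hφd : Differentiable ℝ φ := hφ.differentiable (by simp)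
  have hgd : Differentiable ℝ g := hg.differentiable (by simp)
  have hφ'd : Differentiable ℝ (deriv φ) := (hφ.iterate_deriv 1).differentiable (by simp)
  have normal : pd 0 (pd 0 ((fun p => φ (p 0)) * g)) = (fun p => deriv (deriv φ) (p 0)) * g := by
    rw [pd_zero_comp_apply_zero_mul hφd hgd hg₀, pd_zero_comp_apply_zero_mul hφ'd hgd hg₀]
  have tangential {i : Fin 3} (hi : i ≠ 0) :
      pd i (pd i ((fun p => φ (p 0)) * g)) = (fun p => φ (p 0)) * pd i (pd i g) := by
    rw [pd_comp_apply_zero_mul_of_ne hi hφd hgd,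
      pd_comp_apply_zero_mul_of_ne hi hφd ((contDiff_pd i hg).differentiable (by simp))]
  funext p
  simp only [lap, Fin.sum_univ_three, normal, tangential (i := 1) (by decide),
    tangential (i := 2) (by decide), hg₀, pd_zero, Pi.add_apply, Pi.mul_apply, Pi.zero_apply]
  ring

lemma pd_zero_lap_comp_apply_zero_mul (hφ : ContDiff ℝ ∞ φ) (hg : ContDiff ℝ ∞ g)
    (hg₀ : pd 0 g = 0) (p : Fin 3 → ℝ) :
    pd 0 (lap ((fun p => φ (p 0)) * g)) p =
      iteratedDeriv 3 φ (p 0) * g p + iteratedDeriv 1 φ (p 0) * lap g p := by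
  have hφ'' : ContDiff ℝ ∞ (deriv (deriv φ)) := hφ.iterate_deriv 2
  have hφd : Differentiable ℝ φ := hφ.differentiable (by simp)
  have hφ''d : Differentiable ℝ (deriv (deriv φ)) := hφ''.differentiable (by simp)
  have hgd : Differentiable ℝ g := hg.differentiable (by simp)
  have hlapd : Differentiable ℝ (lap g) := (contDiff_lap hg).differentiable (by simp)
  have hlap₀ : pd 0 (lap g) = 0 := by
    rw [pd_lap 0 hg, hg₀]
    funext q
    simp only [lap, pd_zero, Pi.zero_apply, Finset.sum_const_zero]
  rw [lap_comp_apply_zero_mul hφ hg hg₀,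
    pd_add 0 ((differentiable_comp_apply_zero hφ''d).mul hgd)
      ((differentiable_comp_apply_zero hφd).mul hlapd),
    pd_zero_comp_apply_zero_mul hφ''d hgd hg₀, pd_zero_comp_apply_zero_mul hφd hlapd hlap₀]
  simp only [iteratedDeriv_succ, iteratedDeriv_zero, Pi.add_apply, Pi.mul_apply]

end PartialDerivatives

section Conformal

/-- The pure-trace tensor `u δ`, an infinitesimal conformal deformation of the flat metric. -/
def conformal (u : (Fin 3 → ℝ) → ℝ) (i j : Fin 3) : (Fin 3 → ℝ) → ℝ :=
  if i = j then u else 0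

variable {u v : (Fin 3 → ℝ) → ℝ}

lemma conformal_symm (u : (Fin 3 → ℝ) → ℝ) (i j : Fin 3) : conformal u i j = conformal u j i := by
  simp only [conformal, eq_comm]

lemma contDiff_conformal (hu : ContDiff ℝ ∞ u) (i j : Fin 3) : ContDiff ℝ ∞ (conformal u i j) := by
  unfold conformal
  split_ifs
  exacts [hu, contDiff_const]

lemma perYZ_conformal (hu : PerYZ u) (i j : Fin 3) : PerYZ (conformal u i j) := by
  unfold conformal
  split_ifs
  exacts [hu, fun _ => ⟨rfl, rfl⟩]

lemma PerYZ.add (hu : PerYZ u) (hv : PerYZ v) : PerYZ (u + v) := fun p =>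
  ⟨congrArg₂ (· + ·) (hu p).1 (hv p).1, congrArg₂ (· + ·) (hu p).2 (hv p).2⟩

lemma pd_pd_conformal (u : (Fin 3 → ℝ) → ℝ) (a b i j : Fin 3) (p : Fin 3 → ℝ) :
    pd a (pd b (conformal u i j)) p = if i = j then pd a (pd b u) p else 0 := by
  unfold conformal
  split_ifs <;> simp [pd_zero]

lemma hamT_conformal (u : (Fin 3 → ℝ) → ℝ) : hamT (conformal u) = -lap u := by
  funext p
  simp only [hamT, pd_pd_conformal, Finset.sum_ite_eq, Finset.mem_univ, if_true,
    Finset.sum_const, Finset.card_univ, Fintype.card_fin, ← Finset.mul_sum, Pi.neg_apply, lap,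
    nsmul_eq_mul, Nat.cast_ofNat]
  ring

lemma pd_hamT_conformal_add (i : Fin 3) (hu : ContDiff ℝ ∞ u) (hv : ContDiff ℝ ∞ v)
    (p : Fin 3 → ℝ) :
    pd i (hamT (conformal (u + v))) p = -(pd i (lap u) p + pd i (lap v) p) := by
  rw [hamT_conformal, pd_neg, lap_add hu hv, pd_add i ((contDiff_lap hu).differentiable (by simp))
    ((contDiff_lap hv).differentiable (by simp))]
  rfl

lemma ricT_conformal (hu : ContDiff ℝ 2 u) (i j : Fin 3) :
    ricT (conformal u) i j =
      fun p => -(1 / 2) * (pd i (pd j u) p + if i = j then lap u p else 0) := by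
  funext p
  simp only [ricT, pd_pd_conformal, Finset.sum_sub_distrib, Finset.sum_add_distrib,
    Finset.sum_ite_eq, Finset.mem_univ, if_true, Finset.sum_const, Finset.card_univ,
    Fintype.card_fin, pd_comm j i hu, lap, nsmul_eq_mul, Nat.cast_ofNat]
  split_ifs
  · ring
  · simp only [Finset.sum_const_zero]
    ring

end Conformal

namespace VanishesBoundedly

variable {μ : Measure (Fin 3 → ℝ)} {k : ℕ} {u : ℕ → (Fin 3 → ℝ) → ℝ}

protected lemma pd (hu : VanishesBoundedly μ (k + 1) u) (i : Fin 3) :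
    VanishesBoundedly μ k (fun n => pd i (u n)) :=
  hu.fderiv_apply (Pi.single i 1)

protected lemma lap (hu : VanishesBoundedly μ (k + 2) u) :
    VanishesBoundedly μ k (fun n => lap (u n)) :=
  .sum _ fun a _ => (hu.pd a).pd a

protected lemma conformal (hu : VanishesBoundedly μ k u) (i j : Fin 3) :
    VanishesBoundedly μ k (fun n => conformal (u n) i j) := by
  by_cases hij : i = j
  · simpa only [conformal, if_pos hij] using hu
  · simpa only [conformal, if_neg hij] using zero

protected lemma hamT_conformal (hu : VanishesBoundedly μ (k + 2) u) :
    VanishesBoundedly μ k (fun n => hamT (conformal (u n))) := by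
  have hneg := hu.lap.const_mul (-1)
  simp only [neg_one_mul] at hneg
  simp only [hamT_conformal]
  exact hneg

protected lemma ricT_conformal (hu : VanishesBoundedly μ (k + 2) u) (i j : Fin 3) :
    VanishesBoundedly μ k (fun n => ricT (conformal (u n)) i j) := by
  have htrace : VanishesBoundedly μ k (fun n p => if i = j then lap (u n) p else 0) := by
    split_ifs
    exacts [hu.lap, zero]
  have hsum := (((hu.pd j).pd i).add htrace).const_mul (-(1 / 2))
  simp only [ricT_conformal (contDiff_infty.1 (hu.contDiff _) 2)]
  exact hsum

lemma sq_add_sum_sq_pd (hu : VanishesBoundedly μ (k + 1) u) :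
    VanishesBoundedly μ k (fun n p => u n p ^ 2 + ∑ l, pd l (u n) p ^ 2) :=
  (hu.mono k.le_succ).sq.add (.sum _ fun l _ => (hu.pd l).sq)

lemma eventually_conformal_small [IsFiniteMeasure μ] (hu : VanishesBoundedly μ 3 u) {δ : ℝ}
    (hδ : 0 < δ) : ∀ᶠ n in atTop,
      (∫ p, ∑ i, ∑ j, (conformal (u n) i j p ^ 2 +
        ∑ l, pd l (conformal (u n) i j) p ^ 2) ∂μ) < δ ∧
      (∫ p, ∑ i, ∑ j, ricT (conformal (u n)) i j p ^ 2 ∂μ) < δ ∧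
      (∫ p, (hamT (conformal (u n)) p ^ 2 +
        ∑ l, pd l (hamT (conformal (u n))) p ^ 2) ∂μ) < δ := by
  have htensor := (VanishesBoundedly.sum Finset.univ fun i _ => .sum Finset.univ fun j _ =>
    ((hu.mono (k := 1) (by norm_num)).conformal i j).sq_add_sum_sq_pd).tendsto_integral
  have hric := (VanishesBoundedly.sum Finset.univ fun i _ => .sum Finset.univ fun j _ =>
    ((hu.mono (k := 2) (by norm_num)).ricT_conformal i j).sq).tendsto_integral
  have hham := (hu.hamT_conformal (k := 1)).sq_add_sum_sq_pd.tendsto_integral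
  exact (htensor.eventually_lt_const hδ).and
    ((hric.eventually_lt_const hδ).and (hham.eventually_lt_const hδ))

end VanishesBoundedly

section BoundaryLayer

/-- The projection of `ℝ³` onto the tangential coordinates `(y, z)`. -/
def projYZ : (Fin 3 → ℝ) →L[ℝ] (Fin 2 → ℝ) :=
  ContinuousLinearMap.pi fun i => ContinuousLinearMap.proj i.succ

lemma projYZ_apply (p : Fin 3 → ℝ) : projYZ p = ![p 1, p 2] := by
  funext i
  fin_cases i <;> rfl

lemma projYZ_single_zero : projYZ (Pi.single 0 1) = 0 := by
  rw [projYZ_apply]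
  simp

lemma projYZ_single_succ (i : Fin 2) : projYZ (Pi.single i.succ 1) = Pi.single i 1 := by
  funext j
  simp [projYZ, Pi.single_apply]

lemma pd_zero_comp_projYZ {G : (Fin 2 → ℝ) → ℝ} (hG : Differentiable ℝ G) :
    pd 0 (G ∘ projYZ) = 0 := by
  funext p
  rw [pd, fderiv_comp p (hG _) projYZ.differentiableAt, projYZ.fderiv]
  simp [projYZ_single_zero]

/-- The boundary layer at the face `x = c` with normal profile `φ` and amplitude `G`. The exponent
`3` makes third derivatives of size one, so that lower ones vanish uniformly as `n → ∞`. -/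
noncomputable def boundaryLayer (φ : ℝ → ℝ) (c : ℝ) (G : (Fin 2 → ℝ) → ℝ) (n : ℕ) :
    (Fin 3 → ℝ) → ℝ :=
  (fun p => concentrate φ 3 c n (p 0)) * (G ∘ projYZ)

variable {φ : ℝ → ℝ} {G : (Fin 2 → ℝ) → ℝ}

lemma perYZ_boundaryLayer (φ : ℝ → ℝ) (c : ℝ) (hG : PerBoth G) (n : ℕ) :
    PerYZ (boundaryLayer φ c G n) := by
  have h₁ : projYZ (Pi.single 1 1) = Pi.single 0 1 := projYZ_single_succ 0
  have h₂ : projYZ (Pi.single 2 1) = Pi.single 1 1 := projYZ_single_succ 1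
  intro p
  simp [boundaryLayer, map_add, h₁, h₂, hG (projYZ p)]

lemma measure_map_restrict_cube_singleton (c : ℝ) :
    (volume.restrict Cube).map
      (ContinuousLinearMap.proj 0 : (Fin 3 → ℝ) →L[ℝ] ℝ) {c} = 0 := by
  rw [Measure.map_apply (ContinuousLinearMap.continuous _).measurable (measurableSet_singleton c)]
  exact Measure.absolutelyContinuous_of_le Measure.restrict_le_self
    (Measure.pi_hyperplane (fun _ : Fin 3 => (volume : Measure ℝ)) 0 c)

lemma vanishesBoundedly_boundaryLayer (hφ : ContDiff ℝ ∞ φ)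
    (hsupp : tsupport φ ⊆ Metric.ball 0 1) (c : ℝ) (hG : ContDiff ℝ ∞ G) :
    VanishesBoundedly (volume.restrict Cube) 3 (boundaryLayer φ c G) :=
  ((vanishesBoundedly_concentrate hφ hsupp 3 c
    (measure_map_restrict_cube_singleton c)).comp_continuousLinearMap _).mul_restrict_isCompact
    isCompact_Icc measurableSet_Icc (hG.comp projYZ.contDiff)

lemma pd_zero_lap_boundaryLayer (hφ : ContDiff ℝ ∞ φ) (c : ℝ) (hG : ContDiff ℝ ∞ G) (n : ℕ)
    (p : Fin 3 → ℝ) :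
    pd 0 (lap (boundaryLayer φ c G n)) p =
      iteratedDeriv 3 (concentrate φ 3 c n) (p 0) * G (projYZ p) +
        iteratedDeriv 1 (concentrate φ 3 c n) (p 0) * lap (G ∘ projYZ) p :=
  pd_zero_lap_comp_apply_zero_mul (contDiff_concentrate hφ 3 c n) (hG.comp projYZ.contDiff)
    (pd_zero_comp_projYZ (hG.differentiable (by simp))) p

lemma pd_zero_lap_boundaryLayer_of_eq (hφ : ContDiff ℝ ∞ φ) (hφ₁ : iteratedDeriv 1 φ 0 = 0)
    (hG : ContDiff ℝ ∞ G) (n : ℕ) (p : Fin 3 → ℝ) :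
    pd 0 (lap (boundaryLayer φ (p 0) G n)) p = iteratedDeriv 3 φ 0 * G (projYZ p) := by
  have hfirst : iteratedDeriv 1 (concentrate φ 3 (p 0) n) (p 0) = 0 := by
    rw [iteratedDeriv_concentrate hφ, sub_self, mul_zero, hφ₁, mul_zero, zero_div]
  rw [pd_zero_lap_boundaryLayer hφ _ hG, iteratedDeriv_concentrate_self hφ, hfirst, zero_mul,
    add_zero]

lemma pd_zero_lap_boundaryLayer_of_one_le (hφ : ContDiff ℝ ∞ φ)
    (hsupp : tsupport φ ⊆ Metric.ball 0 1) {c : ℝ} (hG : ContDiff ℝ ∞ G) (n : ℕ) {p : Fin 3 → ℝ}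
    (hp : 1 ≤ |p 0 - c|) : pd 0 (lap (boundaryLayer φ c G n)) p = 0 := by
  have hfar : 1 ≤ (n + 1) * |p 0 - c| :=
    hp.trans (le_mul_of_one_le_left (abs_nonneg _) (le_add_of_nonneg_left n.cast_nonneg))
  simp only [pd_zero_lap_boundaryLayer hφ c hG,
    iteratedDeriv_concentrate_eq_zero hφ hsupp 3 _ n hfar, zero_mul, add_zero]

end BoundaryLayer

/-- For every `ε > 0` and smooth doubly periodic boundary data
`G₀, G₁ : ℝ² → ℝ` there is a symmetric smooth periodic tensor field `h` with
`∂₁(Ham h) = G₀` on `x = 0` and `= G₁` on `x = 1`, whose `H¹` norm, together with the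
`L²` norm of `Ric h` and the `H¹` norm of `Ham h`, is smaller than `ε`. -/
theorem stmt14 (ε : ℝ) (hε : 0 < ε) (G₀ G₁ : (Fin 2 → ℝ) → ℝ)
    (hG₀s : ContDiff ℝ (⊤ : ℕ∞) G₀) (hG₁s : ContDiff ℝ (⊤ : ℕ∞) G₁)
    (hG₀p : PerBoth G₀) (hG₁p : PerBoth G₁) :
    ∃ h : Fin 3 → Fin 3 → (Fin 3 → ℝ) → ℝ,
      (∀ i j, h i j = h j i) ∧
      (∀ i j, ContDiff ℝ (⊤ : ℕ∞) (h i j)) ∧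
      (∀ i j, PerYZ (h i j)) ∧
      (∀ p : Fin 3 → ℝ, p 0 = 0 → pd 0 (hamT h) p = G₀ ![p 1, p 2]) ∧
      (∀ p : Fin 3 → ℝ, p 0 = 1 → pd 0 (hamT h) p = G₁ ![p 1, p 2]) ∧
      (∫ p in Cube, ∑ i, ∑ j, ((h i j p) ^ 2 + ∑ l, (pd l (h i j) p) ^ 2)) < ε ^ 2 ∧
      (∫ p in Cube, ∑ i, ∑ j, (ricT h i j p) ^ 2) < ε ^ 2 ∧
      (∫ p in Cube, ((hamT h p) ^ 2 + ∑ l, (pd l (hamT h) p) ^ 2)) < ε ^ 2 := by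
  obtain ⟨φ, hφ, hsupp, hjet⟩ := exists_profile_iteratedDeriv_eq 3 (-1)
  have hlayer₀ := vanishesBoundedly_boundaryLayer hφ hsupp 0 hG₀s
  have hlayer₁ := vanishesBoundedly_boundaryLayer hφ hsupp 1 hG₁s
  have hu := hlayer₀.add hlayer₁
  have hflux (n : ℕ) (p : Fin 3 → ℝ) :
      pd 0 (hamT (conformal (boundaryLayer φ 0 G₀ n + boundaryLayer φ 1 G₁ n))) p =
        -(pd 0 (lap (boundaryLayer φ 0 G₀ n)) p + pd 0 (lap (boundaryLayer φ 1 G₁ n)) p) :=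
    pd_hamT_conformal_add 0 (hlayer₀.contDiff n) (hlayer₁.contDiff n) p
  have : IsFiniteMeasure (volume.restrict Cube) :=
    isFiniteMeasure_restrict.2 isCompact_Icc.measure_lt_top.ne
  obtain ⟨n, hsmall⟩ := (hu.eventually_conformal_small (pow_pos hε 2)).exists
  refine ⟨_, conformal_symm _, contDiff_conformal (hu.contDiff n), perYZ_conformal
    ((perYZ_boundaryLayer φ 0 hG₀p n).add (perYZ_boundaryLayer φ 1 hG₁p n)),
    fun p hp => ?_, fun p hp => ?_, hsmall⟩
  · have hself := pd_zero_lap_boundaryLayer_of_eq hφ (hjet 1) hG₀s n p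
    rw [hp, hjet 3] at hself
    rw [hflux, hself, pd_zero_lap_boundaryLayer_of_one_le hφ hsupp hG₁s n (by simp [hp])]
    simp [projYZ_apply]
  · have hself := pd_zero_lap_boundaryLayer_of_eq hφ (hjet 1) hG₁s n p
    rw [hp, hjet 3] at hself
    rw [hflux, hself, pd_zero_lap_boundaryLayer_of_one_le hφ hsupp hG₀s n (by simp [hp])]
    simp [projYZ_apply]
end
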